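/- Let m and n be integers with 2 ≤ m ≤ n, m ≠ 3 and n ≠ 3, and let G = K_m ∨ K_n be the join of the complete graphs K_m and K_n. Then γ_MR(G) = 1. -/

import Mathlib

open Finset

namespace MRD

variable {V : Type*}

open scoped Classical

/-- Sum of `f` over the closed neighborhood of `v` in `G`:
`f(N[v]) = \sum_{u \in N[v]} f(u)`. -/
noncomputable def closedNbhdSum [Fintype V] (G : SimpleGraph V) (f : V → ℤ) (v : V) : ℤ :=
  ∑ u ∈ Finset.univ.filter (fun u => G.Adj v u ∨ u = v), f u

/-- `f : V → {-1, 1, 2}` is a Majority Roman Dominating Function (MRDF) on `G`: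
(i) `f(N[v]) ≥ 1` for at least half of the vertices, and (ii) every vertex with value `-1`
is adjacent to a vertex with value `2`. -/
noncomputable def IsMRDF [Fintype V] (G : SimpleGraph V) (f : V → ℤ) : Prop :=
  (∀ v, f v = -1 ∨ f v = 1 ∨ f v = 2) ∧
  Fintype.card V ≤ 2 * (Finset.univ.filter (fun v => 1 ≤ closedNbhdSum G f v)).card ∧
  (∀ u, f u = -1 → ∃ w, G.Adj u w ∧ f w = 2)

/-- The majority Roman domination number `γ_MR(G)`: the minimum weight
`w(f) = ∑_v f(v)` over all MRDFs `f` on `G`. -/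
noncomputable def mrdNum [Fintype V] (G : SimpleGraph V) : ℤ :=
  sInf {w : ℤ | ∃ f : V → ℤ, IsMRDF G f ∧ w = ∑ v, f v}

/-- The join `G ∨ H` of two simple graphs: disjoint union plus all edges between the parts. -/
def join {α β : Type*} (G : SimpleGraph α) (H : SimpleGraph β) : SimpleGraph (α ⊕ β) where
  Adj x y :=
    match x, y with
    | .inl a, .inl b => G.Adj a b
    | .inr a, .inr b => H.Adj a b
    | .inl _, .inr _ => True
    | .inr _, .inl _ => True
  symm := by constructor; rintro (a | a) (b | b) h <;> simp_all [SimpleGraph.adj_comm]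
  loopless := by constructor; rintro (a | a) h <;> simp_all

/-- The corona `G ∘ H` of two simple graphs: one copy of `G` and `|V(G)|` copies of `H`,
where the `v`-th vertex of `G` is joined to every vertex of the `v`-th copy of `H`. -/
def corona {α β : Type*} (G : SimpleGraph α) (H : SimpleGraph β) : SimpleGraph (α ⊕ α × β) where
  Adj x y :=
    match x, y with
    | .inl u, .inl v => G.Adj u v
    | .inr p, .inr q => p.1 = q.1 ∧ H.Adj p.2 q.2
    | .inl u, .inr p => u = p.1
    | .inr p, .inl u => u = p.1
  symm := by
    constructor; rintro (u | ⟨u, x⟩) (v | ⟨v, y⟩) h <;> simp_all [SimpleGraph.adj_comm, eq_comm]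
  loopless := by constructor; rintro (u | ⟨u, x⟩) h <;> simp_all

/-- `S` is a dominating set of `G`. -/
def IsDomSet (G : SimpleGraph V) (S : Finset V) : Prop :=
  ∀ v, v ∉ S → ∃ u ∈ S, G.Adj v u

/-- The domination number `γ(G)`. -/
noncomputable def domNum [Fintype V] (G : SimpleGraph V) : ℕ :=
  sInf {k | ∃ S : Finset V, IsDomSet G S ∧ S.card = k}

/-- A set of vertices is independent if no two of its vertices are adjacent. -/
def IsIndepSet (G : SimpleGraph V) (S : Finset V) : Prop :=
  ∀ a ∈ S, ∀ b ∈ S, ¬ G.Adj a b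

/-- The independence number `β₀(G)`. -/
noncomputable def indepNum [Fintype V] (G : SimpleGraph V) : ℕ :=
  sSup {k | ∃ S : Finset V, IsIndepSet G S ∧ S.card = k}

/-- The cocktail party graph `K_{2n} - M` (complete graph minus a perfect matching),
realized on `Fin n × Fin 2`: `(i,a)` and `(j,b)` are adjacent iff `i ≠ j`. -/
def cocktail (n : ℕ) : SimpleGraph (Fin n × Fin 2) where
  Adj x y := x.1 ≠ y.1
  symm := ⟨fun _ _ h => h.symm⟩
  loopless := ⟨fun _ h => h rfl⟩

end MRD

theorem exists_seq (N : ℕ) (hN : 4 ≤ N) : ∃ g : ℕ → ℤ, (∀ k, g k = -1 ∨ g k = 1 ∨ g k = 2) ∧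
    g 0 = 2 ∧ ∑ k ∈ Finset.range N, g k = 1 := by
  rcases Nat.even_or_odd N with h | h
  · obtain ⟨j, rfl⟩ : ∃ j, N = 2 * j + 2 := by
      obtain ⟨r, hr⟩ := h
      exact ⟨r - 1, by omega⟩
    refine ⟨fun k => if k = 0 then 2 else if k % 2 = 1 then -1 else 1, ?_, rfl, ?_⟩
    · intro k
      dsimp only
      split_ifs <;> simp
    · clear hN h
      induction j with
      | zero => simp [Finset.sum_range_succ]
      | succ j ih =>
        rw [show 2 * (j + 1) + 2 = (2 * j + 2) + 1 + 1 by ring, Finset.sum_range_succ,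
          Finset.sum_range_succ, ih]
        have h1 : (2 * j + 2) % 2 = 0 := by omega
        have h2 : (2 * j + 2 + 1) % 2 = 1 := by omega
        simp [h1, h2]
  · obtain ⟨j, rfl⟩ : ∃ j, N = 2 * j + 5 := by
      obtain ⟨r, hr⟩ := h
      exact ⟨r - 2, by omega⟩
    refine ⟨fun k => if k < 2 then 2 else if k < 5 then -1 else if k % 2 = 1 then -1 else 1,
      ?_, rfl, ?_⟩
    · intro k
      dsimp only
      split_ifs <;> simp
    · clear hN h
      induction j with
      | zero => simp [Finset.sum_range_succ]
      | succ j ih =>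
        rw [show 2 * (j + 1) + 5 = (2 * j + 5) + 1 + 1 by ring, Finset.sum_range_succ,
          Finset.sum_range_succ, ih]
        have h1 : (2 * j + 5) % 2 = 1 := by omega
        have h2 : (2 * j + 5 + 1) % 2 = 0 := by omega
        have h3 : ¬ (2 * j + 5 < 2) := by omega
        have h4 : ¬ (2 * j + 5 < 5) := by omega
        have h5 : ¬ (2 * j + 5 + 1 < 2) := by omega
        have h6 : ¬ (2 * j + 5 + 1 < 5) := by omega
        simp only [h1, h2, h3, h4, h5, h6]
        norm_num

theorem join_top_adj {m n : ℕ} (x y : Fin m ⊕ Fin n) :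
    (MRD.join (⊤ : SimpleGraph (Fin m)) (⊤ : SimpleGraph (Fin n))).Adj x y ↔ x ≠ y := by
  rcases x with a | a <;> rcases y with b | b <;> simp [MRD.join]

theorem nbhd_eq {m n : ℕ} (f : Fin m ⊕ Fin n → ℤ) (v : Fin m ⊕ Fin n) :
    MRD.closedNbhdSum (MRD.join (⊤ : SimpleGraph (Fin m)) (⊤ : SimpleGraph (Fin n))) f v
      = ∑ u, f u := by
  unfold MRD.closedNbhdSum
  congr 1
  ext u
  simp only [Finset.mem_filter, Finset.mem_univ, true_and, join_top_adj, iff_true]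
  tauto

/-- For `2 ≤ m ≤ n` with `m ≠ 3` and `n ≠ 3`, `γ_MR(K_m ∨ K_n) = 1`. -/
theorem mrdNum_join_complete (m n : ℕ) (hm : 2 ≤ m) (hmn : m ≤ n) (hm3 : m ≠ 3) (hn3 : n ≠ 3) :
    MRD.mrdNum (MRD.join (⊤ : SimpleGraph (Fin m)) (⊤ : SimpleGraph (Fin n))) = 1 := by
  have hlb : ∀ w ∈ {w : ℤ | ∃ f : Fin m ⊕ Fin n → ℤ, MRD.IsMRDF (MRD.join
      (⊤ : SimpleGraph (Fin m)) (⊤ : SimpleGraph (Fin n))) f ∧ w = ∑ v, f v}, 1 ≤ w := by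
    rintro w ⟨f, ⟨-, h2, -⟩, rfl⟩
    by_contra hlt
    simp only [nbhd_eq, hlt] at h2
    simp at h2
    omega
  obtain ⟨g, hg, hg0, hs⟩ := exists_seq (m + n) (by omega)
  unfold MRD.mrdNum
  apply IsLeast.csInf_eq
  refine ⟨⟨fun v => g (finSumFinEquiv v : Fin (m + n)), ?_, ?_⟩, fun w hw => hlb w hw⟩
  all_goals
    have hsum : ∑ v : Fin m ⊕ Fin n, g (finSumFinEquiv v : Fin (m + n)) = 1 := by
      rw [Equiv.sum_comp finSumFinEquiv (fun k : Fin (m + n) => g k),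
        Fin.sum_univ_eq_sum_range g, hs]
  · refine ⟨fun v => hg _, ?_, ?_⟩
    · simp only [nbhd_eq, hsum]
      simp
      omega
    · intro u hu
      have h0 : g (finSumFinEquiv (Sum.inl ⟨0, by omega⟩ : Fin m ⊕ Fin n) : Fin (m + n)) = 2 := by
        simpa using hg0
      refine ⟨Sum.inl ⟨0, by omega⟩, ?_, h0⟩
      rw [join_top_adj]
      intro he
      dsimp only at hu
      rw [he, h0] at hu
      norm_num at hu
  · exact hsum.symm
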